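/- Let A be a module with an endomorphism N satisfying N^{n+1} = 0, and let M_• be the convolution filtration of the kernel filtration F_p A = ker(N^{p+1}) and the image filtration G^q A = im(N^q). Then M_• is the monodromy filtration of N; that is, it satisfies: (1) M_r A = A for r ≥ n and M_r A = 0 for r ≤ −n−1; (2) N(M_r A) ⊆ M_{r−2} A for all r ∈ ℤ; (3) for every r ≥ 0 the map N^r induces an isomorphism Gr^M_r A ≅ Gr^M_{−r} A; and these three properties characterize M_• uniquely among increasing filtrations of A. -/

import Mathlib

/-!
# Statement 1

For a module `A` with an endomorphism `N` satisfying `N^(n+1) = 0`, the convolution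
filtration of the kernel filtration `F_p A = ker (N^(p+1))` and the image filtration
`G^q A = im (N^q)` is the monodromy filtration of `N`: it satisfies
(1) `M_r A = A` for `r ≥ n` and `M_r A = 0` for `r ≤ -n-1`;
(2) `N (M_r A) ⊆ M_(r-2) A` for all `r : ℤ`;
(3) for every `r ≥ 0`, `N^r` induces an isomorphism `Gr^M_r A ≅ Gr^M_(-r) A`;
and these properties characterize the filtration uniquely among increasing filtrations.
-/

open LinearMap

section

variable {R A : Type*} [CommRing R] [AddCommGroup A] [Module R A]

/-- The graded piece `Q / P` of two filtration steps `P ⊆ Q` of `A`. -/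
abbrev filGradedPiece (Q P : Submodule R A) : Type _ :=
  Q ⧸ (P.comap Q.subtype)

/-- The kernel filtration `F_p A = ker (N^(p+1))` for `p ≥ 0`. -/
def kerFil (N : A →ₗ[R] A) (p : ℕ) : Submodule R A :=
  LinearMap.ker (N ^ (p + 1))

/-- The image filtration `G^q A = im (N^q)`; note `G^0 A = A`. -/
def imFil (N : A →ₗ[R] A) (q : ℕ) : Submodule R A :=
  LinearMap.range (N ^ q)

/-- The convolution filtration `M_r A = Σ_{p-q=r} (F_p A ⊓ G^q A)`. -/
def convFil (N : A →ₗ[R] A) (r : ℤ) : Submodule R A :=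
  ⨆ pq : {pq : ℕ × ℕ // (pq.1 : ℤ) - (pq.2 : ℤ) = r}, kerFil N pq.1.1 ⊓ imFil N pq.1.2

/-- `N^r` induces an isomorphism `Gr^M_r A ≅ Gr^M_(-r) A` for the filtration `M`. -/
def PowInducesIso (N : A →ₗ[R] A) (M : ℤ → Submodule R A) (r : ℕ) : Prop :=
  ∃ e : filGradedPiece (M (r : ℤ)) (M ((r : ℤ) - 1)) ≃ₗ[R]
      filGradedPiece (M (-(r : ℤ))) (M (-(r : ℤ) - 1)),
    ∀ (x : A) (hx : x ∈ M (r : ℤ)) (hx' : (N ^ r) x ∈ M (-(r : ℤ))),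
      e (Submodule.Quotient.mk ⟨x, hx⟩) = Submodule.Quotient.mk ⟨(N ^ r) x, hx'⟩

/-- `M` is the monodromy filtration of `N` (with `N^(n+1) = 0`): an increasing filtration
with `M_r = A` for `r ≥ n`, `M_r = 0` for `r ≤ -n-1`, `N M_r ⊆ M_(r-2)`, and such that
`N^r` induces an isomorphism `Gr^M_r A ≅ Gr^M_(-r) A` for every `r ≥ 0`. -/
def IsMonodromyFiltration (N : A →ₗ[R] A) (n : ℕ) (M : ℤ → Submodule R A) : Prop :=
  Monotone M ∧
  (∀ r : ℤ, (n : ℤ) ≤ r → M r = ⊤) ∧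
  (∀ r : ℤ, r ≤ -(n : ℤ) - 1 → M r = ⊥) ∧
  (∀ r : ℤ, ∀ x ∈ M r, N x ∈ M (r - 2)) ∧
  (∀ r : ℕ, PowInducesIso N M r)

end

section

variable {R A : Type*} [CommRing R] [AddCommGroup A] [Module R A]
  {N : A →ₗ[R] A} {M M' : ℤ → Submodule R A}

/-- If `N` shifts a filtration by `-2`, then `N ^ k` shifts it by `-2k`. -/
theorem pow_mem_of_shift (h : ∀ r : ℤ, ∀ x ∈ M r, N x ∈ M (r - 2)) (k : ℕ) :
    ∀ r s : ℤ, r - 2 * k = s → ∀ x ∈ M r, (N ^ k) x ∈ M s := by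
  induction k with
  | zero =>
    intro r s hs x hx
    obtain rfl : r = s := by simpa using hs
    simpa using hx
  | succ k ih =>
    intro r s hs x hx
    rw [pow_succ]
    exact ih (r - 2) s (by push_cast at hs; linarith) _ (h r x hx)

/-- `N ^ r` induces an isomorphism of graded pieces iff it is injective and surjective
modulo lower filtration steps. -/
theorem powInducesIso_iff (h : ∀ r : ℤ, ∀ x ∈ M r, N x ∈ M (r - 2)) (r : ℕ) :
    PowInducesIso N M r ↔
      (∀ x ∈ M (r : ℤ), (N ^ r) x ∈ M (-(r : ℤ) - 1) → x ∈ M ((r : ℤ) - 1)) ∧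
      (∀ y ∈ M (-(r : ℤ)), ∃ x ∈ M (r : ℤ), y - (N ^ r) x ∈ M (-(r : ℤ) - 1)) := by
  have hmap : ∀ x ∈ M (r : ℤ), (N ^ r) x ∈ M (-(r : ℤ)) :=
    pow_mem_of_shift h r _ _ (by ring)
  have hmap_pred : ∀ x ∈ M ((r : ℤ) - 1), (N ^ r) x ∈ M (-(r : ℤ) - 1) :=
    pow_mem_of_shift h r _ _ (by ring)
  constructor
  · rintro ⟨e, he⟩
    refine ⟨fun x hx hNx => ?_, fun y hy => ?_⟩
    · have hzero : e (Submodule.Quotient.mk ⟨x, hx⟩) = 0 := by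
        rw [he x hx (hmap x hx), Submodule.Quotient.mk_eq_zero]
        exact hNx
      rw [LinearEquiv.map_eq_zero_iff, Submodule.Quotient.mk_eq_zero] at hzero
      exact hzero
    · obtain ⟨z, hz⟩ := e.surjective (Submodule.Quotient.mk ⟨y, hy⟩)
      obtain ⟨⟨x, hx⟩, rfl⟩ := Submodule.Quotient.mk_surjective _ z
      rw [he x hx (hmap x hx), eq_comm, Submodule.Quotient.eq] at hz
      exact ⟨x, hx, hz⟩
  · rintro ⟨hinj, hsurj⟩
    let f : filGradedPiece (M (r : ℤ)) (M ((r : ℤ) - 1)) →ₗ[R]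
        filGradedPiece (M (-(r : ℤ))) (M (-(r : ℤ) - 1)) :=
      Submodule.mapQ _ _ ((N ^ r).restrict hmap) fun x hx => hmap_pred x hx
    refine ⟨LinearEquiv.ofBijective f ⟨?_, ?_⟩, fun x hx hx' => rfl⟩
    · rw [injective_iff_map_eq_zero]
      intro z hz
      obtain ⟨⟨x, hx⟩, rfl⟩ := Submodule.Quotient.mk_surjective _ z
      rw [Submodule.Quotient.mk_eq_zero]
      exact hinj x hx ((Submodule.Quotient.mk_eq_zero ((M (-(r : ℤ) - 1)).comap (M _).subtype)).1 hz)
    · intro z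
      obtain ⟨⟨y, hy⟩, rfl⟩ := Submodule.Quotient.mk_surjective _ z
      obtain ⟨x, hx, hxy⟩ := hsurj y hy
      refine ⟨Submodule.Quotient.mk ⟨x, hx⟩, Eq.symm ?_⟩
      exact (Submodule.Quotient.eq ((M (-(r : ℤ) - 1)).comap (M _).subtype)).2 hxy

/-- In a monodromy filtration, `M_(-r) = N^r (M_r)`. -/
theorem IsMonodromyFiltration.exists_pow_eq {n : ℕ} (hM : IsMonodromyFiltration N n M)
    (r : ℕ) : ∀ y ∈ M (-(r : ℤ)), ∃ x ∈ M (r : ℤ), (N ^ r) x = y := by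
  obtain ⟨hmono, -, hbot, hshift, hiso⟩ := hM
  suffices ∀ k r : ℕ, n + 1 ≤ r + k → ∀ y ∈ M (-(r : ℤ)), ∃ x ∈ M (r : ℤ), (N ^ r) x = y from
    this (n + 1) r (by omega)
  intro k
  induction k with
  | zero =>
    intro r hr y hy
    rw [hbot _ (by omega), Submodule.mem_bot] at hy
    exact ⟨0, zero_mem _, by rw [hy, map_zero]⟩
  | succ k ih =>
    intro r hr y hy
    obtain ⟨x, hx, hxy⟩ := ((powInducesIso_iff hshift r).1 (hiso r)).2 y hy
    obtain ⟨z, hz, hzy⟩ := ih (r + 1) (by omega) (y - (N ^ r) x)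
      (by convert hxy using 2; push_cast; ring)
    refine ⟨x + N z, add_mem hx (hmono (by push_cast; linarith) (hshift _ z hz)), ?_⟩
    rw [map_add, ← Module.End.mul_apply, ← pow_succ, hzy]
    abel

/-- Any monodromy filtration of `N` is contained in any other one. -/
theorem IsMonodromyFiltration.le {n : ℕ} (hM : IsMonodromyFiltration N n M)
    (hM' : IsMonodromyFiltration N n M') : M ≤ M' := by
  have hshift' := hM'.2.2.2.1
  have transfer : ∀ r : ℕ, M (r : ℤ) ≤ M' (r : ℤ) → M (-(r : ℤ)) ≤ M' (-(r : ℤ)) := by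
    intro r hr y hy
    obtain ⟨x, hx, rfl⟩ := hM.exists_pow_eq r y hy
    exact pow_mem_of_shift hshift' r _ _ (by ring) x (hr hx)
  have step : ∀ r : ℕ, M ((r + 1 : ℕ) : ℤ) ≤ M' ((r + 1 : ℕ) : ℤ) →
      M ((r + 2 : ℕ) : ℤ) ≤ M' ((r + 2 : ℕ) : ℤ) → M (r : ℤ) ≤ M' (r : ℤ) := by
    intro r h1 h2 x hx
    have hpow := transfer (r + 2) h2
      (pow_mem_of_shift hM.2.2.2.1 (r + 1) r _ (by push_cast; ring) x hx)
    have hmem := ((powInducesIso_iff hshift' (r + 1)).1 (hM'.2.2.2.2 (r + 1))).1 x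
      (h1 (hM.1 (by push_cast; linarith) hx))
      (by convert hpow using 2; push_cast; ring)
    simpa using hmem
  have nonneg : ∀ k r : ℕ, n ≤ r + k → M (r : ℤ) ≤ M' (r : ℤ) := by
    intro k
    induction k with
    | zero =>
      intro r hr
      rw [hM'.2.1 r (by omega)]
      exact le_top
    | succ k ih => exact fun r hr => step r (ih _ (by omega)) (ih _ (by omega))
  intro r
  obtain ⟨k, rfl | rfl⟩ := r.eq_nat_or_neg
  · exact nonneg n k (by omega)
  · exact transfer k (nonneg n k (by omega))

theorem inf_le_convFil {p q : ℕ} {r : ℤ} (h : (p : ℤ) - q = r) :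
    kerFil N p ⊓ imFil N q ≤ convFil N r :=
  le_iSup (fun pq : {pq : ℕ × ℕ // (pq.1 : ℤ) - (pq.2 : ℤ) = r} =>
    kerFil N pq.1.1 ⊓ imFil N pq.1.2) ⟨(p, q), h⟩

theorem convFil_le {r : ℤ} {P : Submodule R A}
    (h : ∀ p q : ℕ, (p : ℤ) - q = r → kerFil N p ⊓ imFil N q ≤ P) : convFil N r ≤ P :=
  iSup_le fun pq => h pq.1.1 pq.1.2 pq.2

theorem kerFil_le_convFil (p : ℕ) : kerFil N p ≤ convFil N p := fun x hx =>
  inf_le_convFil (p := p) (q := 0) (by simp) ⟨hx, x, by simp⟩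

theorem convFil_monotone : Monotone (convFil N) := by
  refine monotone_int_of_le_succ fun r => convFil_le fun p q hpq => ?_
  refine le_trans (inf_le_inf_right _ fun x hx => ?_)
    (inf_le_convFil (p := p + 1) (q := q) (by push_cast; linarith))
  rw [kerFil, LinearMap.mem_ker] at hx ⊢
  rw [pow_succ', Module.End.mul_apply, hx, map_zero]

theorem apply_mem_convFil (r : ℤ) : ∀ x ∈ convFil N r, N x ∈ convFil N (r - 2) := by
  suffices convFil N r ≤ (convFil N (r - 2)).comap N from this
  refine convFil_le fun p q hpq => ?_
  rintro _ ⟨hx, y, rfl⟩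
  rw [SetLike.mem_coe, kerFil, LinearMap.mem_ker] at hx
  rw [Submodule.mem_comap]
  rcases p with - | p
  · rw [zero_add, pow_one] at hx
    rw [hx]
    exact zero_mem _
  · refine inf_le_convFil (p := p) (q := q + 1) (by push_cast at hpq ⊢; linarith) ⟨?_, y, ?_⟩
    · rwa [SetLike.mem_coe, kerFil, LinearMap.mem_ker, ← Module.End.mul_apply, ← pow_succ]
    · rw [pow_succ', Module.End.mul_apply]

theorem convFil_neg_le_map (r : ℕ) :
    convFil N (-(r : ℤ)) ≤ (convFil N (r : ℤ)).map (N ^ r) := by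
  refine convFil_le fun p q hpq => ?_
  obtain rfl : q = r + p := by omega
  rintro _ ⟨hx, y, rfl⟩
  rw [SetLike.mem_coe, kerFil, LinearMap.mem_ker, ← Module.End.mul_apply, ← pow_add] at hx
  refine ⟨(N ^ p) y, inf_le_convFil (p := r + p) (q := p) (by push_cast; ring) ⟨?_, y, rfl⟩, ?_⟩
  · rw [SetLike.mem_coe, kerFil, LinearMap.mem_ker, ← Module.End.mul_apply, ← pow_add, ← hx]
    congr 2
    ring
  · rw [pow_add, Module.End.mul_apply]

theorem powInducesIso_convFil (r : ℕ) : PowInducesIso N (convFil N) r := by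
  refine (powInducesIso_iff apply_mem_convFil r).2 ⟨fun x _ hNx => ?_, fun y hy => ?_⟩
  · obtain ⟨y, hy, hyx⟩ := convFil_neg_le_map (N := N) (r + 1)
      (by convert hNx using 2; push_cast; ring)
    have hNy : N y ∈ convFil N ((r : ℤ) - 1) := by
      convert apply_mem_convFil _ y hy using 2
      push_cast
      ring
    have hker : (N ^ r) (x - N y) = 0 := by
      rw [map_sub, ← Module.End.mul_apply (N ^ r) N, ← pow_succ, hyx, sub_self]
    have hsub : x - N y ∈ convFil N ((r : ℤ) - 1) := by
      rcases r with - | r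
      · rw [pow_zero, Module.End.one_apply] at hker
        rw [hker]
        exact zero_mem _
      · simpa using kerFil_le_convFil r (LinearMap.mem_ker.2 hker)
    simpa using add_mem hsub hNy
  · obtain ⟨x, hx, rfl⟩ := convFil_neg_le_map r hy
    exact ⟨x, hx, by simp⟩

theorem isMonodromyFiltration_convFil {n : ℕ} (hN : N ^ (n + 1) = 0) :
    IsMonodromyFiltration N n (convFil N) := by
  refine ⟨convFil_monotone, fun r hr => ?_, fun r hr => ?_, apply_mem_convFil,
    powInducesIso_convFil⟩
  · rw [eq_top_iff]
    refine le_trans (fun x _ => ?_) ((kerFil_le_convFil n).trans (convFil_monotone hr))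
    rw [kerFil, hN, LinearMap.mem_ker, LinearMap.zero_apply]
  · rw [eq_bot_iff]
    refine convFil_le fun p q hpq => inf_le_right.trans ?_
    rw [imFil, pow_eq_zero_of_le (show n + 1 ≤ q by omega) hN, LinearMap.range_zero]

end

/-- If `N^(n+1) = 0` then the convolution filtration of the kernel and
image filtrations is the monodromy filtration of `N`, and it is the unique increasing
filtration with these properties. -/
theorem stmt_1 {R A : Type*} [CommRing R] [AddCommGroup A] [Module R A]
    (N : A →ₗ[R] A) (n : ℕ) (hN : N ^ (n + 1) = 0) :
    IsMonodromyFiltration N n (convFil N) ∧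
      ∀ M : ℤ → Submodule R A, IsMonodromyFiltration N n M → M = convFil N := by
  have hconv := isMonodromyFiltration_convFil hN
  exact ⟨hconv, fun M hM => le_antisymm (hM.le hconv) (hconv.le hM)⟩
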